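/- Let H be a non-zero complex Hilbert space, let Y be a real Banach space, and let Δ : S(H) → S(Y) be a surjective isometry between the unit spheres. Then the norm of Y satisfies ‖x + y‖² + ‖x − y‖² = 4 for all x, y ∈ S(Y); consequently (by Day's theorem) Y is a Hilbert space, i.e. the norm of Y comes from an inner product. -/

import Mathlib

/-!
An isometric embedding `f` of the unit sphere of `Y` into that of a strictly convex space sends
antipodes to antipodes, since these are the points at distance `2`. When the ambient space is
Euclidean, the parallelogram law for `f x` and `f y` becomes the rhombus law for `x` and `y`.

By Day's theorem the rhombus law makes the norm Euclidean. It suffices to treat a plane. Choose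
unit vectors `a`, `b` of maximal determinant and move along the ellipse
`c θ = cos θ • a + sin θ • b`; maximality gives `1 ≤ ‖c θ‖ * ‖c (θ + π / 2)‖`. If `s` and `t` both
parametrize pairs of unit conjugate radii `c θ`, `c (θ + π / 2)`, then two applications of the
rhombus law give `‖c m‖ ^ 2 + ‖c (m + π / 2)‖ ^ 2 = 2` at the midpoint `m`, and the determinant
bound forces both norms to be `1`. Bisection shows that the whole ellipse lies on the unit sphere.
-/

open Module Real Set

section Midpoint

variable {E : Type*} [AddCommGroup E] [Module ℝ E] [TopologicalSpace E] [IsTopologicalAddGroup E]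
  [ContinuousSMul ℝ E]

theorem convex_of_isClosed_of_midpoint_mem {s : Set E} (hs : IsClosed s)
    (hmid : ∀ x ∈ s, ∀ y ∈ s, midpoint ℝ x y ∈ s) : Convex ℝ s := by
  refine convex_iff_segment_subset.2 fun x hx y hy => ?_
  rw [segment_eq_image_lineMap]
  rintro _ ⟨t, ⟨ht₀, ht₁⟩, rfl⟩
  set S : Set ℝ := AffineMap.lineMap x y ⁻¹' s
  have hS : IsClosed S := hs.preimage AffineMap.lineMap_continuous
  have hS₀ : (0 : ℝ) ∈ S := by simpa [S] using hx
  have hS₁ : (1 : ℝ) ∈ S := by simpa [S] using hy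
  obtain ⟨l, ⟨hlS, hl₀, hlt⟩, hl⟩ :=
    (isCompact_Icc.inter_left hS).exists_isGreatest ⟨0, hS₀, le_rfl, ht₀⟩
  obtain ⟨r, ⟨hrS, htr, hr₁⟩, hr⟩ :=
    (isCompact_Icc.inter_left hS).exists_isLeast ⟨1, hS₁, ht₁, le_rfl⟩
  have hm : midpoint ℝ l r ∈ S := by
    simpa only [S, mem_preimage, AffineMap.map_midpoint] using hmid _ hlS _ hrS
  have hmr : midpoint ℝ l r + midpoint ℝ l r = l + r := midpoint_add_self ℝ l r
  obtain hmt | htm := le_total (midpoint ℝ l r) t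
  · have hml : midpoint ℝ l r ≤ l := hl ⟨hm, by linarith, hmt⟩
    rwa [show t = l by linarith]
  · have hrm : r ≤ midpoint ℝ l r := hr ⟨hm, htm, by linarith⟩
    rwa [show t = r by linarith]

end Midpoint

section Auerbach

variable {𝕜 ι : Type*} [RCLike 𝕜] [Fintype ι]

theorem norm_multilinearMap_le_of_norm_eq_one {E : ι → Type*} {F : Type*}
    [∀ i, NormedAddCommGroup (E i)] [∀ i, NormedSpace 𝕜 (E i)] [SeminormedAddCommGroup F]
    [NormedSpace 𝕜 F] (f : MultilinearMap 𝕜 E F) {C : ℝ}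
    (hf : ∀ v, (∀ i, ‖v i‖ = 1) → ‖f v‖ ≤ C) (v : ∀ i, E i) : ‖f v‖ ≤ C * ∏ i, ‖v i‖ := by
  by_cases! hv : ∃ i, v i = 0
  · obtain ⟨i, hi⟩ := hv
    rw [f.map_coord_zero i hi, norm_zero, Finset.prod_eq_zero (Finset.mem_univ i) (by simp [hi]),
      mul_zero]
  · have hpos : 0 < ∏ i, ‖v i‖ := Finset.prod_pos fun i _ => norm_pos_iff.2 (hv i)
    have hunit := hf (fun i => (‖v i‖⁻¹ : 𝕜) • v i) fun i => norm_smul_inv_norm (hv i)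
    simpa [f.map_smul_univ, norm_smul, inv_mul_le_iff₀' hpos] using hunit

variable {E : Type*} [NormedAddCommGroup E] [NormedSpace 𝕜 E] [DecidableEq ι]

theorem continuous_basis_det (e : Basis ι 𝕜 E) : Continuous e.det := by
  have := e.finiteDimensional_of_finite
  refine Continuous.matrix_det (continuous_matrix fun i j => ?_)
  exact (e.coord i).continuous_of_finiteDimensional.comp (continuous_apply j)

/-- An **Auerbach basis** is found by maximizing the determinant over families of unit vectors. -/
theorem exists_basis_norm_eq_one_and_norm_det_le (e : Basis ι 𝕜 E) :
    ∃ b : Basis ι 𝕜 E, (∀ i, ‖b i‖ = 1) ∧ ∀ v : ι → E, ‖b.det v‖ ≤ ∏ i, ‖v i‖ := by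
  have := e.finiteDimensional_of_finite
  have := FiniteDimensional.proper_rclike 𝕜 E
  obtain ⟨b, hb, hmax⟩ :=
    (isCompact_univ_pi fun _ : ι => isCompact_sphere (0 : E) 1).exists_isMaxOn
      ⟨fun i => (‖e i‖⁻¹ : 𝕜) • e i, fun i _ => by simp [norm_smul_inv_norm (e.ne_zero i)]⟩
      (continuous_basis_det e).norm.continuousOn
  have hle : ∀ v, ‖e.det v‖ ≤ ‖e.det b‖ * ∏ i, ‖v i‖ :=
    norm_multilinearMap_le_of_norm_eq_one e.det.toMultilinearMap fun v hv =>
      hmax fun i _ => by simpa using hv i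
  have hdet : e.det b ≠ 0 := fun h => by
    have hself := hle e
    rw [e.det_self, h, norm_one, norm_zero, zero_mul] at hself
    exact not_le_of_gt one_pos hself
  obtain ⟨hli, hspan⟩ := (Basis.is_basis_iff_det e).2 hdet.isUnit
  refine ⟨Basis.mk hli hspan.ge, fun i => by simpa using hb i trivial, fun v => ?_⟩
  have hscale : e.det v = e.det b * (Basis.mk hli hspan.ge).det v := by
    simpa using DFunLike.congr_fun (e.det.eq_smul_basis_det (Basis.mk hli hspan.ge)) v
  refine le_of_mul_le_mul_left ?_ (norm_pos_iff.2 hdet)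
  rw [← norm_mul, ← hscale]
  exact hle v

end Auerbach

section Ellipse

variable {E : Type*} [AddCommGroup E] [Module ℝ E]

/-- The standard parametrization of the ellipse with conjugate radii `a` and `b`; the radius
conjugate to `ellipse a b θ` is `ellipse a b (θ + π / 2)`. -/
noncomputable def ellipse (a b : E) (θ : ℝ) : E := cos θ • a + sin θ • b

theorem ellipse_zero (a b : E) : ellipse a b 0 = a := by simp [ellipse]

theorem ellipse_pi_div_two (a b : E) : ellipse a b (π / 2) = b := by simp [ellipse]

theorem ellipse_add_pi (a b : E) (θ : ℝ) : ellipse a b (θ + π) = -ellipse a b θ := by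
  simp only [ellipse, cos_add_pi, sin_add_pi]
  module

theorem ellipse_add_ellipse (a b : E) (s t : ℝ) :
    ellipse a b s + ellipse a b t = (2 * cos ((s - t) / 2)) • ellipse a b ((s + t) / 2) :=
  calc ellipse a b s + ellipse a b t = (cos s + cos t) • a + (sin s + sin t) • b := by
        simp only [ellipse]
        module
    _ = (2 * cos ((s - t) / 2)) • ellipse a b ((s + t) / 2) := by
        simp only [cos_add_cos, sin_add_sin, ellipse]
        module

theorem ellipse_sub_ellipse (a b : E) (s t : ℝ) :
    ellipse a b s - ellipse a b t =
      (2 * sin ((s - t) / 2)) • ellipse a b ((s + t) / 2 + π / 2) :=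
  calc ellipse a b s - ellipse a b t = (cos s - cos t) • a + (sin s - sin t) • b := by
        simp only [ellipse]
        module
    _ = (2 * sin ((s - t) / 2)) • ellipse a b ((s + t) / 2 + π / 2) := by
        simp only [cos_sub_cos, sin_sub_sin, ellipse, cos_add_pi_div_two, sin_add_pi_div_two]
        module

theorem det_ellipse_conjugate (b : Basis (Fin 2) ℝ E) (θ : ℝ) :
    b.det ![ellipse (b 0) (b 1) θ, ellipse (b 0) (b 1) (θ + π / 2)] = 1 := by
  simp [Basis.det_apply, Matrix.det_fin_two, Basis.toMatrix_apply, ellipse, cos_add_pi_div_two,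
    sin_add_pi_div_two, ← sq]

theorem exists_eq_smul_ellipse (a b : E) (α β : ℝ) :
    ∃ r θ : ℝ, r ^ 2 = α ^ 2 + β ^ 2 ∧ α • a + β • b = r • ellipse a b θ := by
  set z : ℂ := ⟨α, β⟩
  refine ⟨‖z‖, z.arg, ?_, ?_⟩
  · rw [Complex.sq_norm, Complex.normSq_mk]
    ring
  · rw [ellipse, smul_add, smul_smul, smul_smul, Complex.norm_mul_cos_arg,
      Complex.norm_mul_sin_arg]

end Ellipse

/-- The parallelogram identity restricted to unit vectors, the hypothesis of Day's theorem. -/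
def RhombusLaw (E : Type*) [NormedAddCommGroup E] : Prop :=
  ∀ x y : E, ‖x‖ = 1 → ‖y‖ = 1 → ‖x + y‖ ^ 2 + ‖x - y‖ ^ 2 = 4

namespace RhombusLaw

variable {E : Type*} [NormedAddCommGroup E] [NormedSpace ℝ E] {a b : E}

theorem sq_norm_ellipse_midpoint (h : RhombusLaw E) {s t : ℝ} (hs : ‖ellipse a b s‖ = 1)
    (ht : ‖ellipse a b t‖ = 1) :
    cos ((s - t) / 2) ^ 2 * ‖ellipse a b ((s + t) / 2)‖ ^ 2 +
      sin ((s - t) / 2) ^ 2 * ‖ellipse a b ((s + t) / 2 + π / 2)‖ ^ 2 = 1 := by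
  have h₄ := h _ _ hs ht
  simp only [ellipse_add_ellipse, ellipse_sub_ellipse, norm_smul, mul_pow, norm_eq_abs,
    sq_abs] at h₄
  linarith

theorem norm_ellipse_midpoint (h : RhombusLaw E)
    (hconj : ∀ θ, 1 ≤ ‖ellipse a b θ‖ * ‖ellipse a b (θ + π / 2)‖) {s t : ℝ}
    (hs : ‖ellipse a b s‖ = 1) (hs' : ‖ellipse a b (s + π / 2)‖ = 1)
    (ht : ‖ellipse a b t‖ = 1) (ht' : ‖ellipse a b (t + π / 2)‖ = 1) :
    ‖ellipse a b ((s + t) / 2)‖ = 1 ∧ ‖ellipse a b ((s + t) / 2 + π / 2)‖ = 1 := by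
  have hmid := h.sq_norm_ellipse_midpoint hs ht
  have hmid' := h.sq_norm_ellipse_midpoint hs' ht'
  rw [add_sub_add_right_eq_sub, show (s + π / 2 + (t + π / 2)) / 2 = (s + t) / 2 + π / 2 by ring,
    add_assoc _ (π / 2), add_halves, ellipse_add_pi, norm_neg] at hmid'
  have hpq := hconj ((s + t) / 2)
  set p := ‖ellipse a b ((s + t) / 2)‖
  set q := ‖ellipse a b ((s + t) / 2 + π / 2)‖
  have hsum : p ^ 2 + q ^ 2 = 2 := by
    linear_combination hmid + hmid' - (p ^ 2 + q ^ 2) * sin_sq_add_cos_sq ((s - t) / 2)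
  have heq : p = q := by nlinarith [sq_nonneg (p - q)]
  have hp : p = 1 := by
    rw [← heq] at hsum
    exact (pow_eq_one_iff_of_nonneg (norm_nonneg _) two_ne_zero).1 (by linarith)
  exact ⟨hp, heq ▸ hp⟩

theorem norm_ellipse_eq_one (h : RhombusLaw E) (ha : ‖a‖ = 1) (hb : ‖b‖ = 1)
    (hconj : ∀ θ, 1 ≤ ‖ellipse a b θ‖ * ‖ellipse a b (θ + π / 2)‖) (θ : ℝ) :
    ‖ellipse a b θ‖ = 1 := by
  set A : Set ℝ := {φ | ‖ellipse a b φ‖ = 1 ∧ ‖ellipse a b (φ + π / 2)‖ = 1}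
  have hcont : Continuous (ellipse a b) := by
    unfold ellipse
    fun_prop
  have hclosed : IsClosed A := by
    apply IsClosed.inter <;> exact isClosed_eq (by fun_prop) continuous_const
  have hconvex : Convex ℝ A := by
    refine convex_of_isClosed_of_midpoint_mem hclosed fun s hs t ht => ?_
    rw [midpoint_eq_smul_add, invOf_eq_inv, smul_eq_mul, inv_mul_eq_div]
    exact h.norm_ellipse_midpoint hconj hs.1 hs.2 ht.1 ht.2
  have hzero : 0 ∈ A := by simp [A, ellipse_zero, ellipse_pi_div_two, ha, hb]
  have hpi : π ∈ A := ⟨by simp [ellipse, ha],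
    by simp [add_comm π, ellipse_add_pi, ellipse_pi_div_two, hb]⟩
  have hperiodic : Function.Periodic (fun φ => ‖ellipse a b φ‖) π := fun φ => by
    simp only [ellipse_add_pi, norm_neg]
  obtain ⟨φ, hφ, hθφ⟩ := hperiodic.exists_mem_Ico₀ pi_pos θ
  exact hθφ.trans (hconvex.ordConnected.out hzero hpi (Ico_subset_Icc_self hφ)).1

theorem sq_norm_eq_of_norm_det_le (h : RhombusLaw E) (b : Basis (Fin 2) ℝ E)
    (hb : ∀ i, ‖b i‖ = 1) (hdet : ∀ v, ‖b.det v‖ ≤ ∏ i, ‖v i‖) (x : E) :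
    ‖x‖ ^ 2 = b.repr x 0 ^ 2 + b.repr x 1 ^ 2 := by
  have hconj (θ : ℝ) :
      1 ≤ ‖ellipse (b 0) (b 1) θ‖ * ‖ellipse (b 0) (b 1) (θ + π / 2)‖ := by
    simpa [det_ellipse_conjugate] using
      hdet ![ellipse (b 0) (b 1) θ, ellipse (b 0) (b 1) (θ + π / 2)]
  obtain ⟨r, θ, hr, hx⟩ := exists_eq_smul_ellipse (b 0) (b 1) (b.repr x 0) (b.repr x 1)
  rw [← Fin.sum_univ_two fun i => b.repr x i • b i, b.sum_repr] at hx
  rw [← hr, hx, norm_smul, h.norm_ellipse_eq_one (hb 0) (hb 1) hconj, mul_one, norm_eq_abs,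
    sq_abs]

theorem parallelogram_of_basis_fin_two (h : RhombusLaw E) (e : Basis (Fin 2) ℝ E) (x y : E) :
    ‖x + y‖ ^ 2 + ‖x - y‖ ^ 2 = 2 * (‖x‖ ^ 2 + ‖y‖ ^ 2) := by
  obtain ⟨b, hb, hdet⟩ := exists_basis_norm_eq_one_and_norm_det_le e
  simp only [h.sq_norm_eq_of_norm_det_le b hb hdet, map_add, map_sub, Finsupp.add_apply,
    Finsupp.sub_apply]
  ring

/-- **Day's theorem**. -/
theorem innerProductSpaceable (h : RhombusLaw E) : InnerProductSpaceable E := by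
  refine ⟨fun x y => ?_⟩
  simp only [← sq]
  obtain rfl | hx := eq_or_ne x 0
  · simp [two_mul]
  by_cases hli : LinearIndependent ℝ ![x, y]
  · set p := Submodule.span ℝ (range ![x, y])
    have hp : RhombusLaw p := fun u v hu hv => h u v hu hv
    exact hp.parallelogram_of_basis_fin_two (Basis.span hli)
      ⟨x, Submodule.subset_span ⟨0, rfl⟩⟩ ⟨y, Submodule.subset_span ⟨1, rfl⟩⟩
  · obtain ⟨c, rfl⟩ : ∃ c : ℝ, c • x = y := by
      simpa [LinearIndependent.pair_iff' hx] using hli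
    rw [show x + c • x = (1 + c) • x by module, show x - c • x = (1 - c) • x by module]
    simp only [norm_smul, mul_pow, norm_eq_abs, sq_abs]
    ring

end RhombusLaw

section SphereEmbedding

variable {H Y : Type*} [NormedAddCommGroup H] [NormedAddCommGroup Y] [NormedSpace ℝ Y] {f : Y → H}

theorem map_neg_of_isometry_on_unit_sphere [NormedSpace ℝ H] [StrictConvexSpace ℝ H]
    (hf : ∀ y, ‖y‖ = 1 → ‖f y‖ = 1)
    (hiso : ∀ x y, ‖x‖ = 1 → ‖y‖ = 1 → ‖f x - f y‖ = ‖x - y‖) {y : Y} (hy : ‖y‖ = 1) :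
    f (-y) = -f y := by
  have hy' : ‖-y‖ = 1 := by rwa [norm_neg]
  have hdist : ‖f y - f (-y)‖ = 2 := by
    rw [hiso y (-y) hy hy', sub_neg_eq_add, ← two_smul ℝ y, norm_smul, hy]
    norm_num
  refine neg_eq_iff_eq_neg.1 (eq_of_norm_eq_of_norm_add_eq ?_ ?_).symm
  · rw [norm_neg, hf y hy, hf (-y) hy']
  · rw [norm_neg, ← sub_eq_add_neg, hdist, hf y hy, hf (-y) hy']
    norm_num

theorem rhombusLaw_of_isometry_on_unit_sphere [InnerProductSpace ℝ H]
    (hf : ∀ y, ‖y‖ = 1 → ‖f y‖ = 1)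
    (hiso : ∀ x y, ‖x‖ = 1 → ‖y‖ = 1 → ‖f x - f y‖ = ‖x - y‖) : RhombusLaw Y := by
  intro x y hx hy
  have hadd : ‖x + y‖ = ‖f x + f y‖ := by
    rw [← sub_neg_eq_add, ← hiso x (-y) hx (by rwa [norm_neg]),
      map_neg_of_isometry_on_unit_sphere hf hiso hy, sub_neg_eq_add]
  have hpar := parallelogram_law_with_norm ℝ (f x) (f y)
  rw [hf x hx, hf y hy] at hpar
  rw [hadd, ← hiso x y hx hy]
  linarith

end SphereEmbedding

theorem target_is_hilbert_of_sphere_isometry_general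
    {H : Type*} [NormedAddCommGroup H] [InnerProductSpace ℝ H]
    {Y : Type*} [NormedAddCommGroup Y] [NormedSpace ℝ Y] (f : Y → H)
    (hf : ∀ y, ‖y‖ = 1 → ‖f y‖ = 1)
    (hiso : ∀ x y, ‖x‖ = 1 → ‖y‖ = 1 → ‖f x - f y‖ = ‖x - y‖) :
    (∀ x y : Y, ‖x‖ = 1 → ‖y‖ = 1 → ‖x + y‖ ^ 2 + ‖x - y‖ ^ 2 = 4) ∧
      Nonempty (InnerProductSpace ℝ Y) := by
  have h : RhombusLaw Y := rhombusLaw_of_isometry_on_unit_sphere hf hiso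
  have := h.innerProductSpaceable
  exact ⟨h, nonempty_innerProductSpace ℝ Y⟩

/-- if there is a surjective isometry between the unit sphere of a
non-zero complex Hilbert space `H` and the unit sphere of a real Banach space `Y`,
then `‖x + y‖² + ‖x − y‖² = 4` for all `x, y ∈ S(Y)`, and consequently the norm of
`Y` comes from an inner product. -/
theorem target_is_hilbert_of_sphere_isometry
    {H : Type*} [NormedAddCommGroup H] [InnerProductSpace ℂ H] [CompleteSpace H]
    [Nontrivial H]
    {Y : Type*} [NormedAddCommGroup Y] [NormedSpace ℝ Y] [CompleteSpace Y]
    (Δ : H → Y)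
    (hmap : ∀ x : H, ‖x‖ = 1 → ‖Δ x‖ = 1)
    (hsurj : ∀ y : Y, ‖y‖ = 1 → ∃ x : H, ‖x‖ = 1 ∧ Δ x = y)
    (hiso : ∀ x y : H, ‖x‖ = 1 → ‖y‖ = 1 → ‖Δ x - Δ y‖ = ‖x - y‖) :
    (∀ x y : Y, ‖x‖ = 1 → ‖y‖ = 1 → ‖x + y‖ ^ 2 + ‖x - y‖ ^ 2 = 4) ∧
      Nonempty (InnerProductSpace ℝ Y) := by
  let _ : InnerProductSpace ℝ H := .complexToReal
  choose! f hf hΔ using hsurj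
  exact target_is_hilbert_of_sphere_isometry_general f hf fun x y hx hy => by
    rw [← hiso _ _ (hf x hx) (hf y hy), hΔ x hx, hΔ y hy]
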